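/- arXiv:quant-ph/0702073 — 6 statements merged into one kernel-verified Lean document; each statement's English description precedes it below -/
import Mathlib

section
/- For every N ≥ 0, the square of the N-th Krawtchouk matrix is 2^N times the identity: (K^(N))^2 = 2^N · I, where I is the (N+1)×(N+1) identity matrix. -/
/-!
The `j`-th column of `K^(N)` is the coefficient sequence of `P_j = (1 - X)^j (1 + X)^(N-j)`.
Homogenizing `P_j` in degree `N` gives the form `(b - a)^j (b + a)^(N-j)`, that is,
`∑ k, K_{kj} a^k b^(N-k) = (b - a)^j (b + a)^(N-j)` (`sum_kraw_mul`). At `a = 1 - X`, `b = 1 + X`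
the left side is `∑ k, K_{kj} P_k`, whose coefficients form the `j`-th column of the square,
while the right side is `(2X)^j 2^(N-j) = 2^N X^j`.
-/

/-- The `(i,j)` entry of the `N`-th Krawtchouk matrix:
`K^(N)_{ij} = ∑_k (−1)^k C(j,k) C(N−j, i−k)`. -/
def kraw (N i j : ℕ) : ℤ :=
  ∑ k ∈ Finset.range (i + 1), (-1 : ℤ) ^ k * (j.choose k) * ((N - j).choose (i - k))

/-- The `N`-th Krawtchouk matrix, an `(N+1)×(N+1)` integer matrix. -/
def Kmat (N : ℕ) : Matrix (Fin (N + 1)) (Fin (N + 1)) ℤ :=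
  Matrix.of fun i j => kraw N i j

open Polynomial in
/-- The entries in column `j` are the coefficients of `(1 - X)^j (1 + X)^(N-j)`. -/
lemma kraw_eq_coeff (N i j : ℕ) :
    kraw N i j = ((1 - X : ℤ[X]) ^ j * (1 + X) ^ (N - j)).coeff i := by
  have h (k : ℕ) : ((1 - X : ℤ[X]) ^ j).coeff k = (-1) ^ k * (j.choose k : ℤ) := by
    have : (1 - X : ℤ[X]) ^ j = ((1 + X) ^ j : ℤ[X]).comp (-X) := by
      simp [sub_eq_add_neg]
    rw [this, show (-X : ℤ[X]) = C (-1) * X by simp, comp_C_mul_X_coeff, coeff_one_add_X_pow,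
      mul_comm]
  rw [coeff_mul, Finset.Nat.sum_antidiagonal_eq_sum_range_succ_mk, kraw]
  refine Finset.sum_congr rfl fun k _ => ?_
  rw [h, coeff_one_add_X_pow]

open Polynomial in
/-- The degree-`n` homogenization of an integer polynomial `p`, evaluated at `(a, b)`
with `a` in place of the variable; it is meaningful when `p.natDegree ≤ n`. -/
def homEval {R : Type*} [CommRing R] (n : ℕ) (p : ℤ[X]) (a b : R) : R :=
  ∑ k ∈ Finset.range (n + 1), (p.coeff k : R) * (a ^ k * b ^ (n - k))

open Polynomial in
/-- Homogenization is multiplicative for a linear factor `1 + cX`, whose homogenization is `b + ca`.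
This is the induction step for `homEval_prod`. -/
lemma homEval_mul_linear {R : Type*} [CommRing R] (n : ℕ) (p : ℤ[X]) (hp : p.natDegree ≤ n)
    (c : ℤ) (a b : R) :
    homEval (n + 1) (p * (1 + C c * X)) a b = homEval n p a b * (b + c * a) := by
  have hc0 : (p * (1 + C c * X)).coeff 0 = p.coeff 0 := by simp [mul_add]
  have hc (k : ℕ) : (p * (1 + C c * X)).coeff (k + 1) = p.coeff (k + 1) + c * p.coeff k := by
    rw [mul_add, mul_one, coeff_add, mul_left_comm, coeff_C_mul, coeff_mul_X]
  have htop : p.coeff (n + 1) = 0 := coeff_eq_zero_of_natDegree_lt (by omega)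
  have hb : ∑ k ∈ Finset.range (n + 1 + 1), (p.coeff k : R) * (a ^ k * b ^ (n + 1 - k))
      = homEval n p a b * b := by
    rw [Finset.sum_range_succ, htop, homEval, Finset.sum_mul]
    simp only [Int.cast_zero, zero_mul, add_zero]
    refine Finset.sum_congr rfl fun k hk => ?_
    rw [Nat.succ_sub (Finset.mem_range_succ_iff.mp hk), pow_succ]
    ring
  rw [mul_add (homEval n p a b), ← hb, Finset.sum_range_succ', homEval,
    Finset.sum_range_succ', hc0, homEval,
    Finset.sum_mul, add_right_comm, ← Finset.sum_add_distrib]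
  congr 1
  refine Finset.sum_congr rfl fun k _ => ?_
  rw [hc, Nat.add_sub_add_right]
  push_cast
  ring

open Polynomial in
lemma homEval_prod {R : Type*} [CommRing R] (j m : ℕ) (a b : R) :
    homEval (j + m) ((1 - X : ℤ[X]) ^ j * (1 + X) ^ m) a b = (b - a) ^ j * (b + a) ^ m := by
  have hdeg (j m : ℕ) : ((1 - X : ℤ[X]) ^ j * (1 + X) ^ m).natDegree ≤ j + m := by
    compute_degree
  induction m with
  | zero =>
    induction j with
    | zero => simp [homEval]
    | succ j ih =>
      have h := homEval_mul_linear (j + 0) _ (hdeg j 0) (-1) a b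
      rw [ih] at h
      convert h using 1
      · congr 1
        simp only [C_neg, C_1]
        ring
      · push_cast
        ring
  | succ m ih =>
    have h := homEval_mul_linear (j + m) _ (hdeg j m) 1 a b
    rw [ih] at h
    convert h using 1
    · congr 1
      simp only [C_1]
      ring
    · push_cast
      ring

/-- The homogeneous generating function of column `j` of the Krawtchouk matrix. -/
lemma sum_kraw_mul {R : Type*} [CommRing R] {N j : ℕ} (hj : j ≤ N) (a b : R) :
    ∑ k ∈ Finset.range (N + 1), (kraw N k j : R) * (a ^ k * b ^ (N - k))
      = (b - a) ^ j * (b + a) ^ (N - j) := by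
  have h := homEval_prod j (N - j) a b
  rw [Nat.add_sub_cancel' hj, homEval] at h
  simpa only [kraw_eq_coeff] using h

open Polynomial in
/-- The square of the `N`-th Krawtchouk matrix is `2^N` times the identity. -/
theorem krawtchouk_sq (N : ℕ) : Kmat N * Kmat N = (2 ^ N : ℤ) • (1 : Matrix (Fin (N + 1)) (Fin (N + 1)) ℤ) := by
  ext i j
  have hj : (j : ℕ) ≤ N := Nat.le_of_lt_succ j.isLt
  have h := sum_kraw_mul hj (1 - X : ℤ[X]) (1 + X)
  have hr : ((1 + X : ℤ[X]) - (1 - X)) ^ (j : ℕ) * ((1 + X) + (1 - X)) ^ (N - j)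
      = C (2 ^ N) * X ^ (j : ℕ) := by
    rw [show ((1 + X : ℤ[X]) - (1 - X)) = 2 * X by ring,
      show ((1 + X : ℤ[X]) + (1 - X)) = 2 by ring, mul_pow, mul_right_comm, ← pow_add,
      Nat.add_sub_cancel' hj]
    simp
  rw [hr] at h
  have hcoeff := congrArg (fun p : ℤ[X] => p.coeff i) h
  simp only [finsetSum_coeff, coeff_intCast_mul, coeff_C_mul, coeff_X_pow,
    ← kraw_eq_coeff] at hcoeff
  rw [Matrix.mul_apply, Matrix.smul_apply, Matrix.one_apply]
  simp only [Kmat, Matrix.of_apply, smul_eq_mul, Fin.ext_iff]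
  rw [Fin.sum_univ_eq_sum_range (fun k => kraw N i k * kraw N k j) (N + 1), ← hcoeff]
  exact Finset.sum_congr rfl fun k _ => mul_comm _ _
end

section
/- For every N ≥ 1 and all 0 ≤ i, j ≤ N, the entry S^(N)_{ij} of the symmetric Krawtchouk matrix equals the sum ∑ H^(N)_{ab} taken over all pairs 0 ≤ a, b < 2^N with w(a) = i and w(b) = j; that is, the symmetric Krawtchouk matrix is the condensation of the Sylvester–Hadamard matrix obtained by summing rows and columns of equal binary weight. -/
/-- Entry of the symmetric Krawtchouk matrix `S^(N) = K^(N) B^(N)`,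
where `B^(N)` is the diagonal matrix of binomial coefficients. -/
def skraw (N i j : ℕ) : ℤ := kraw N i j * (N.choose j)

/-- The binary shuffling function: `w n` is the number of ones in the binary expansion of `n`. -/
def w (n : ℕ) : ℕ := (Nat.digits 2 n).sum

/-- Entry of the `N`-th Sylvester–Hadamard matrix:
`H^(N)_{ab} = (−1)^{popCount(a AND b)}`. -/
def Hpow (a b : ℕ) : ℤ := (-1 : ℤ) ^ w (a &&& b)

open Polynomial in
/-- `kraw N i j` is the coefficient of `X^i` in `(1 + X)^{N-j} (1 - X)^j`. -/
lemma coeff_eq_kraw (N i j : ℕ) :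
    (((1 + X) ^ (N - j) * (1 - X) ^ j : ℤ[X])).coeff i = kraw N i j := by
  have h : ((1 - X) ^ j : ℤ[X]) = ((1 + X) ^ j : ℤ[X]).comp (C (-1) * X) := by
    simp [sub_eq_add_neg]
  rw [mul_comm, coeff_mul, Finset.Nat.sum_antidiagonal_eq_sum_range_succ_mk, kraw]
  refine Finset.sum_congr rfl fun k _ => ?_
  rw [h, comp_C_mul_X_coeff, coeff_one_add_X_pow, coeff_one_add_X_pow]
  ring

lemma w_two_mul (n : ℕ) : w (2 * n) = w n := by
  rcases Nat.eq_zero_or_pos n with rfl | h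
  · rfl
  · simp [w, Nat.digits_def' (b := 2) (n := 2 * n) (by norm_num) (by omega)]

lemma w_two_mul_add_one (n : ℕ) : w (2 * n + 1) = w n + 1 := by
  have h : (2 * n + 1) / 2 = n := by omega
  simp [w, h, Nat.add_comm 1]

lemma w_le {N b : ℕ} (hb : b < 2 ^ N) : w b ≤ N := by
  induction N generalizing b with
  | zero =>
    obtain rfl : b = 0 := by simpa using hb
    simp [w]
  | succ N ih =>
    rw [pow_succ] at hb
    obtain ⟨c, rfl | rfl⟩ := Nat.even_or_odd' b
    · rw [w_two_mul]
      exact (ih (by omega)).trans (Nat.le_succ N)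
    · rw [w_two_mul_add_one]
      exact Nat.succ_le_succ (ih (by omega))

lemma Hpow_even_even (a b : ℕ) : Hpow (2 * a) (2 * b) = Hpow a b := by
  have h : (2 * a) &&& (2 * b) = 2 * (a &&& b) := Nat.land_bit false a false b
  rw [Hpow, h, w_two_mul, Hpow]

lemma Hpow_odd_even (a b : ℕ) : Hpow (2 * a + 1) (2 * b) = Hpow a b := by
  have h : (2 * a + 1) &&& (2 * b) = 2 * (a &&& b) := Nat.land_bit true a false b
  rw [Hpow, h, w_two_mul, Hpow]

lemma Hpow_even_odd (a b : ℕ) : Hpow (2 * a) (2 * b + 1) = Hpow a b := by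
  have h : (2 * a) &&& (2 * b + 1) = 2 * (a &&& b) := Nat.land_bit false a true b
  rw [Hpow, h, w_two_mul, Hpow]

lemma Hpow_odd_odd (a b : ℕ) : Hpow (2 * a + 1) (2 * b + 1) = -Hpow a b := by
  have h : (2 * a + 1) &&& (2 * b + 1) = 2 * (a &&& b) + 1 := Nat.land_bit true a true b
  rw [Hpow, h, w_two_mul_add_one, Hpow, pow_succ, mul_neg_one]

lemma sum_range_two_mul {M : Type*} [AddCommMonoid M] (f : ℕ → M) (n : ℕ) :
    ∑ a ∈ Finset.range (2 * n), f a = ∑ a ∈ Finset.range n, (f (2 * a) + f (2 * a + 1)) := by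
  induction n with
  | zero => simp
  | succ n ih =>
    rw [Nat.mul_succ, Finset.sum_range_succ, Finset.sum_range_succ, ih, Finset.sum_range_succ,
      add_assoc]

open Polynomial in
/-- The weight enumerator of the `b`-th column of the `N`-th Sylvester–Hadamard matrix: each digit
of `a` contributes a factor `1 + X` or `1 - X` according to the matching digit of `b`. -/
lemma sum_Hpow_X (N b : ℕ) (hb : b < 2 ^ N) :
    ∑ a ∈ Finset.range (2 ^ N), C (Hpow a b) * X ^ w a
      = ((1 + X) ^ (N - w b) * (1 - X) ^ w b : ℤ[X]) := by
  induction N generalizing b with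
  | zero =>
    obtain rfl : b = 0 := by simpa using hb
    simp [w, Hpow]
  | succ N ih =>
    rw [pow_succ] at hb
    rw [pow_succ', sum_range_two_mul]
    obtain ⟨c, rfl | rfl⟩ := Nat.even_or_odd' b
    · have hc : c < 2 ^ N := by omega
      have hs : N + 1 - w c = (N - w c) + 1 := by have := w_le hc; omega
      rw [w_two_mul, hs, pow_succ, mul_right_comm, ← ih c hc, Finset.sum_mul]
      refine Finset.sum_congr rfl fun a _ => ?_
      rw [Hpow_even_even, Hpow_odd_even, w_two_mul, w_two_mul_add_one]
      ring
    · have hc : c < 2 ^ N := by omega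
      rw [w_two_mul_add_one, Nat.add_sub_add_right, pow_succ, ← mul_assoc, ← ih c hc,
        Finset.sum_mul]
      refine Finset.sum_congr rfl fun a _ => ?_
      rw [Hpow_even_odd, Hpow_odd_odd, w_two_mul, w_two_mul_add_one, C_neg]
      ring

open Polynomial in
/-- Summing a column over the rows of weight `i` gives a Krawtchouk number. -/
lemma sum_filter_Hpow (N i b : ℕ) (hb : b < 2 ^ N) :
    ∑ a ∈ (Finset.range (2 ^ N)).filter (fun a => w a = i), Hpow a b = kraw N i (w b) := by
  rw [← coeff_eq_kraw, ← sum_Hpow_X N b hb, finsetSum_coeff, Finset.sum_filter]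
  refine Finset.sum_congr rfl fun a _ => ?_
  rw [coeff_C_mul_X_pow]
  simp only [eq_comm]

lemma card_filter_w (N j : ℕ) :
    (((Finset.range (2 ^ N)).filter (fun b => w b = j)).card : ℤ) = N.choose j := by
  -- The column `b = 0` consists of ones, so its condensed sums count the integers of given weight.
  have h := sum_filter_Hpow N j 0 (by positivity)
  rw [← coeff_eq_kraw] at h
  simpa [Hpow, w, Polynomial.coeff_one_add_X_pow] using h

/-- The symmetric Krawtchouk matrix is the condensation of the Sylvester–Hadamard matrix:
`S^(N)_{ij} = ∑_{w(a)=i, w(b)=j, 0 ≤ a,b < 2^N} H^(N)_{ab}`. -/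
theorem symmetric_krawtchouk_eq_condensed_hadamard (N : ℕ) (hN : 1 ≤ N)
    (i j : ℕ) (hi : i ≤ N) (hj : j ≤ N) :
    skraw N i j
      = ∑ a ∈ (Finset.range (2 ^ N)).filter (fun a => w a = i),
          ∑ b ∈ (Finset.range (2 ^ N)).filter (fun b => w b = j), Hpow a b := by
  rw [Finset.sum_comm, skraw, ← card_filter_w, mul_comm, ← nsmul_eq_mul, ← Finset.sum_const]
  refine Finset.sum_congr rfl fun b hb => ?_
  rw [Finset.mem_filter, Finset.mem_range] at hb
  rw [sum_filter_Hpow N i b hb.1, hb.2]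
end

section
/- Define a sequence of square matrices by I^(1) = the 2×2 identity matrix and I^(N+1) = r( I^(N) ⊗ I₂ ), where I₂ is the 2×2 identity, ⊗ is the Kronecker product with entries (A ⊗ I₂)_{2i+s, 2j+t} = A_{ij}·(I₂)_{st} for s,t ∈ {0,1}, and r is the square contraction. Then for every N ≥ 1, I^(N) = B^(N), the (N+1)×(N+1) diagonal matrix of binomial coefficients. -/
/-!
Tensoring a diagonal matrix with `I₂` repeats every diagonal entry twice, so `A ⊗ I₂` is diagonal
with entry `A (a / 2) (a / 2)` at position `a`. Contracting a diagonal matrix adds the diagonal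
entries at `2i - 1` and `2i`; here these are the old entries number `i - 1` and `i`. Hence one step
of the recursion is Pascal's rule (`contraction_kronI_of_binomial`), and induction on `N` concludes.
-/

/-- Entry of a `2n × 2n` matrix `M` (given by its entries on `0,…,2n−1`) at an
integer position, taken to be `0` outside the range `{0,…,2n−1}`. -/
def mget (n : ℕ) (M : ℕ → ℕ → ℤ) (a b : ℤ) : ℤ :=
  if 0 ≤ a ∧ a < 2 * n ∧ 0 ≤ b ∧ b < 2 * n then M a.toNat b.toNat else 0

/-- The square contraction of a `2n × 2n` matrix `M`:
`(rM)_{ij} = ∑_{a ∈ {2i−1, 2i}} ∑_{b ∈ {2j−1, 2j}} M_{ab}` for `0 ≤ i,j ≤ n`,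
where out-of-range entries of `M` count as zero. -/
def contraction (n : ℕ) (M : ℕ → ℕ → ℤ) (i j : ℕ) : ℤ :=
  mget n M (2 * i - 1) (2 * j - 1) + mget n M (2 * i - 1) (2 * j)
    + mget n M (2 * i) (2 * j - 1) + mget n M (2 * i) (2 * j)

/-- Kronecker product with the `2×2` identity `I₂`:
`(A ⊗ I₂)_{2i+s, 2j+t} = A_{ij} (I₂)_{st}` for `s,t ∈ {0,1}`. -/
def kronI (A : ℕ → ℕ → ℤ) (a b : ℕ) : ℤ :=
  A (a / 2) (b / 2) * (if a % 2 = b % 2 then 1 else 0)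

/-- The sequence `I^(1) = I₂` (the `2×2` identity, extended by zero),
`I^(N+1) = r(I^(N) ⊗ I₂)`; `I^(N)` is an `(N+1)×(N+1)` matrix. -/
def Iseq : ℕ → ℕ → ℕ → ℤ
  | 0, a, b => if a = b ∧ a < 1 then 1 else 0
  | 1, a, b => if a = b ∧ a < 2 then 1 else 0
  | N + 2, i, j => contraction (N + 2) (kronI (Iseq (N + 1))) i j

/-- If `A` is the diagonal matrix of binomial coefficients `C(m, a)`, then `A ⊗ I₂` is diagonal
with the entry `C(m, ⌊a / 2⌋)` at position `a`. -/
theorem mget_kronI_of_binomial (m : ℕ) (A : ℕ → ℕ → ℤ)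
    (hA : ∀ a b, a ≤ m → b ≤ m → A a b = if a = b then (m.choose a : ℤ) else 0) (a b : ℤ) :
    mget (m + 1) (kronI A) a b =
      if a = b ∧ 0 ≤ a ∧ a < 2 * (m + 1) then (m.choose (a.toNat / 2) : ℤ) else 0 := by
  unfold mget kronI
  push_cast
  by_cases h : 0 ≤ a ∧ a < 2 * ((m : ℤ) + 1) ∧ 0 ≤ b ∧ b < 2 * ((m : ℤ) + 1)
  · rw [if_pos h, hA _ _ (by omega) (by omega)]
    by_cases hab : a = b
    · subst hab
      simp [h.1, h.2.1]
    · rw [if_neg (show ¬ (a = b ∧ 0 ≤ a ∧ a < 2 * ((m : ℤ) + 1)) from fun he => hab he.1)]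
      -- Distinct natural numbers differ in their halves or in their parities.
      by_cases hd : a.toNat / 2 = b.toNat / 2
      · rw [if_neg (show ¬ a.toNat % 2 = b.toNat % 2 by omega), mul_zero]
      · rw [if_neg hd, zero_mul]
  · rw [if_neg h, if_neg (by omega)]

/-- One step of the recursion sends the diagonal matrix of the `C(m, i)` to that of the
`C(m + 1, i)`. -/
theorem contraction_kronI_of_binomial (m : ℕ) (A : ℕ → ℕ → ℤ)
    (hA : ∀ a b, a ≤ m → b ≤ m → A a b = if a = b then (m.choose a : ℤ) else 0)
    (i j : ℕ) (hi : i ≤ m + 1) (hj : j ≤ m + 1) :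
    contraction (m + 1) (kronI A) i j = if i = j then ((m + 1).choose i : ℤ) else 0 := by
  unfold contraction
  simp only [mget_kronI_of_binomial m A hA]
  -- The two mixed terms pair an odd position with an even one, hence lie off the diagonal.
  rw [if_neg (show ¬ ((2 * i - 1 : ℤ) = 2 * j ∧ _) by omega),
    if_neg (show ¬ ((2 * i : ℤ) = 2 * j - 1 ∧ _) by omega)]
  by_cases hij : i = j
  · subst hij
    rw [if_pos rfl]
    rcases i with _ | k
    · simp
    · rw [if_pos (by push_cast; omega),
        show (2 * ((k + 1 : ℕ) : ℤ) - 1).toNat / 2 = k by omega,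
        show (2 * ((k + 1 : ℕ) : ℤ)).toNat / 2 = k + 1 by omega, Nat.choose_succ_succ]
      -- In the last row the position `2i` is out of range, in agreement with `C(m, m + 1) = 0`.
      by_cases hk : k + 1 ≤ m
      · rw [if_pos (by push_cast; omega)]
        push_cast
        ring
      · rw [if_neg (by push_cast; omega), Nat.choose_eq_zero_of_lt (show m < k + 1 by omega)]
        push_cast
        ring
  · rw [if_neg (by omega), if_neg (by omega), if_neg hij]
    simp

/-- `I^(N) = B^(N)`, the diagonal matrix of binomial coefficients. -/
theorem iter_contraction_identity_eq_binomial (N : ℕ) (hN : 1 ≤ N)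
    (i j : ℕ) (hi : i ≤ N) (hj : j ≤ N) :
    Iseq N i j = if i = j then (N.choose i : ℤ) else 0 := by
  induction N, hN using Nat.le_induction generalizing i j with
  | base =>
    interval_cases i <;> interval_cases j <;> simp [Iseq]
  | succ m hm ih =>
    obtain ⟨N, rfl⟩ : ∃ N, m = N + 1 := ⟨m - 1, by omega⟩
    exact contraction_kronI_of_binomial (N + 1) _ (fun a b ha hb => ih a b ha hb) i j hi hj
end

section
/- For every N ≥ 0 and every 0 ≤ k ≤ N, the identity (x+y)^{N−k} · (x−y)^k = ∑_{l=0}^{N} K^(N)_{lk} · x^{N−l} y^l holds in the polynomial ring ℤ[x,y]; that is, the matrix of the symmetric representation of the Hadamard matrix H = [[1,1],[1,−1]] in degree N (acting on homogeneous polynomials of degree N in two variables) is the transpose of the N-th Krawtchouk matrix. -/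
open MvPolynomial in
/-- In `ℤ[x,y]`: `(x+y)^{N−k} (x−y)^k = ∑_{l=0}^{N} K^(N)_{lk} x^{N−l} y^l`;
i.e. the symmetric representation of `H = [[1,1],[1,−1]]` in degree `N` is the
transpose of the `N`-th Krawtchouk matrix. -/
theorem symmetric_rep_hadamard_eq_krawtchouk_transpose (N k : ℕ) (hk : k ≤ N) :
    (X 0 + X 1 : MvPolynomial (Fin 2) ℤ) ^ (N - k) * (X 0 - X 1) ^ k
      = ∑ l ∈ Finset.range (N + 1), C (kraw N l k) * X 0 ^ (N - l) * X 1 ^ l := by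
  -- Writing the binomial expansions with the powers of `y` first makes `a` and `b` the exponents
  -- of `y`, matching the indices in `kraw`.
  rw [mul_comm, sub_eq_add_neg, add_comm (X 0) (-X 1), add_comm (X 0) (X 1), add_pow, add_pow,
    Finset.sum_mul_sum, Finset.sum_sigma']
  simp only [kraw, map_sum, Finset.sum_mul]
  rw [Finset.sum_sigma']
  refine Finset.sum_of_injOn (fun p => ⟨p.2 + p.1, p.1⟩) ?_ ?_ ?_ ?_
  · rintro ⟨b, a⟩ - ⟨b', a'⟩ - h
    simp only [Sigma.mk.injEq, heq_eq_eq] at h ⊢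
    omega
  · rintro ⟨b, a⟩ h
    simp only [Finset.coe_sigma, Set.mem_sigma_iff, Finset.coe_range, Set.mem_Iio] at h ⊢
    omega
  · rintro ⟨l, b⟩ h hn
    simp only [Finset.mem_sigma, Finset.mem_range] at h
    have hvanish : k < b ∨ N - k < l - b := by
      by_contra! hc
      refine hn ⟨⟨b, l - b⟩, ?_, ?_⟩
      · simp only [Finset.coe_sigma, Set.mem_sigma_iff, Finset.coe_range, Set.mem_Iio]
        omega
      · simp only [Sigma.mk.injEq, heq_eq_eq, and_true]
        omega
    rcases hvanish with hb | ha
    · simp [Nat.choose_eq_zero_of_lt hb]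
    · simp [Nat.choose_eq_zero_of_lt ha]
  · rintro ⟨b, a⟩ h
    simp only [Finset.mem_sigma, Finset.mem_range] at h
    have hexp : N - (a + b) = (k - b) + (N - k - a) := by omega
    simp only [hexp, Nat.add_sub_cancel, map_mul, map_pow, map_neg, map_one, map_natCast]
    rw [neg_pow]
    ring
end

section
/- With the multivariate Krawtchouk polynomials K_α(n) as defined, they are orthogonal with respect to the multinomial distribution: for every N ≥ 0 and all 0 ≤ α, β ≤ N, ∑_{n ∈ ℕ^d, |n| = N} ( N! / (n_0!⋯n_{d−1}!) ) · p_0^{n_0}⋯p_{d−1}^{n_{d−1}} · K_α(n) · K_β(n) = δ_{αβ} · σ^{2α} · C(N,α), where σ² = ∑_j p_j (ξ_j − μ)² is the variance. -/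
/-!
The proof is by generating functions. Write `t j = ξ j - μ`. The product `K_α(n) K_β(n)` is the
coefficient of `v^α w^β` in `∏ j, ((1 + t j v) (1 + t j w)) ^ n j`, so by the multinomial theorem
the left-hand side is the coefficient of `v^α w^β` in
`(∑ j, p j (1 + t j v) (1 + t j w)) ^ N`. Since `∑ j, p j = 1` and `∑ j, p j t j = 0`, this
is `(1 + σ² v w) ^ N`, which has only diagonal terms, given by the binomial theorem. Polynomials
in `v, w` are encoded as `ℝ[X][X]`, with `v` the outer variable `X` and `w = C X`.
-/

open Polynomial in
/-- The multinomial generating function of the products of two one-variable generating functions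
collapses to a binomial one when `t` is centred under the weights `p`. -/
lemma sum_multinomial_generating {d : ℕ} (t p : Fin d → ℝ) (h1 : ∑ j, p j = 1)
    (h0 : ∑ j, p j * t j = 0) (N : ℕ) :
    ∑ n ∈ Finset.Nat.antidiagonalTuple d N,
        C (C ((Nat.multinomial Finset.univ n : ℝ) * ∏ j, p j ^ n j)) *
          (((∏ j, (1 + C (t j) * X) ^ n j : ℝ[X]).map C) * C (∏ j, (1 + C (t j) * X) ^ n j : ℝ[X]))
      = (1 + C (C (∑ j, p j * t j ^ 2) * X) * X : ℝ[X][X]) ^ N := by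
  have key : (∑ j, C (C (p j)) * ((1 + C (C (t j)) * X) * (1 + C (C (t j)) * C X)) : ℝ[X][X])
      = 1 + C (C (∑ j, p j * t j ^ 2) * X) * X := by
    have e : ∀ j, (C (C (p j)) * ((1 + C (C (t j)) * X) * (1 + C (C (t j)) * C X)) : ℝ[X][X])
        = C (C (p j)) + C (C (p j * t j)) * (X + C X) + C (C (p j * t j ^ 2)) * (C X * X) := by
      intro j
      simp only [map_mul, map_pow]
      ring
    simp only [e, Finset.sum_add_distrib, ← Finset.sum_mul, ← map_sum, h1, h0]
    simp [mul_assoc]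
  rw [← key, Finset.sum_pow_eq_sum_piAntidiag,
    Finset.piAntidiag_univ_fin_eq_antidiagonalTuple]
  refine Finset.sum_congr rfl fun n _ => ?_
  simp only [Polynomial.map_prod, Polynomial.map_pow, Polynomial.map_add, Polynomial.map_one,
    Polynomial.map_mul, Polynomial.map_C, Polynomial.map_X, map_mul, map_prod, map_pow, map_add,
    map_one, map_natCast, mul_pow, Finset.prod_mul_distrib]
  ring

open Polynomial in
lemma coeff_coeff_one_add_pow (s : ℝ) (N α β : ℕ) :
    (((1 + C (C s * X) * X : ℝ[X][X]) ^ N).coeff α).coeff β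
      = if α = β then s ^ α * (N.choose α : ℝ) else 0 := by
  have e : (1 + C (C s * X) * X : ℝ[X][X]) ^ N
      = ((1 + X : ℝ[X][X]) ^ N).comp (C (C s * X) * X) := by
    simp
  rw [e, comp_C_mul_X_coeff, coeff_one_add_X_pow, mul_pow, ← C_pow, mul_comm,
    ← C_eq_natCast, coeff_mul_C, coeff_C_mul_X_pow]
  simp [eq_comm]

open Polynomial in
/-- Orthogonality of the multivariate Krawtchouk polynomials with respect to the
multinomial distribution: for `0 ≤ α, β ≤ N`,
`∑_{|n| = N} (N!/(n_0!⋯n_{d−1}!)) p^n K_α(n) K_β(n) = δ_{αβ} σ^{2α} C(N,α)`,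
where `σ² = ∑_j p_j (ξ_j − μ)²`. Here `K_α(n)` is defined by
`∏_j (1 + v(ξ_j − μ))^{n_j} = ∑_α v^α K_α(n)`. -/
theorem multivariate_krawtchouk_orthogonality
    (d : ℕ) (hd : 1 ≤ d) (ξ p : Fin d → ℝ)
    (hp : ∀ j, 0 ≤ p j) (hsum : ∑ j, p j = 1)
    (μ : ℝ) (hμ : μ = ∑ j, p j * ξ j)
    (K : ℕ → (Fin d → ℕ) → ℝ)
    (hK : ∀ (α : ℕ) (n : Fin d → ℕ),
      K α n = (∏ j, (1 + C (ξ j - μ) * X) ^ (n j) : Polynomial ℝ).coeff α)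
    (N α β : ℕ) (hα : α ≤ N) (hβ : β ≤ N) :
    ∑ n ∈ Finset.Nat.antidiagonalTuple d N,
        (Nat.multinomial Finset.univ n : ℝ) * (∏ j, p j ^ (n j)) * K α n * K β n
      = if α = β then (∑ j, p j * (ξ j - μ) ^ 2) ^ α * (N.choose α : ℝ) else 0 := by
  have h0 : ∑ j, p j * (ξ j - μ) = 0 := by
    simp only [mul_sub, Finset.sum_sub_distrib, ← Finset.sum_mul, hsum, ← hμ, one_mul, sub_self]
  rw [← coeff_coeff_one_add_pow, ← sum_multinomial_generating (fun j => ξ j - μ) p hsum h0 N]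
  simp only [finsetSum_coeff, coeff_C_mul, coeff_mul_C, coeff_map, ← hK]
  refine Finset.sum_congr rfl fun n _ => ?_
  ring
end

section
/- With the multivariate Krawtchouk polynomials K_α(n) as defined, assume additionally that ξ_0 = 0 and p_j > 0 for 1 ≤ j ≤ d−1. Then for every multi-index n ∈ ℕ^d with N = |n| and every 0 ≤ α ≤ N: K_α(n) = (−N)_α · ∑_{r ∈ ℕ^{d−1}, |r| = α} [ ∏_{j=1}^{d−1} (p_j ξ_j)^{r_j} / r! ] · F_B(r, n), where F_B(r, n) = ∑_{k ∈ ℕ^{d−1}, k ≤ r componentwise} [ (−r)_k · (−n)_k / ( (−N)_{|k|} · k! ) ] · ∏_{j=1}^{d−1} p_j^{−k_j} is the terminating Lauricella hypergeometric sum, with (−r)_k = ∏_{j=1}^{d−1} (−r_j)_{k_j}, (−n)_k = ∏_{j=1}^{d−1} (−n_j)_{k_j}, k! = ∏_{j=1}^{d−1} k_j!, |k| = ∑_{j=1}^{d−1} k_j, and (a)_m = a(a+1)⋯(a+m−1) the Pochhammer symbol (all denominators (−N)_{|k|} are nonzero since |k| ≤ α ≤ N). -/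
/-!
Since `ξ 0 = 0`, each factor with `j ≥ 1` is `(1 - μ v) + ξ_j v`, so expanding these factors by the
binomial theorem gives
`∏_j (1 + v(ξ_j − μ))^{n_j} = ∑_k ∏_j C(n_j, k_j) (ξ_j v)^{k_j} · (1 − μ v)^{N − |k|}`.
The coefficient of `v^α` involves `(−μ)^{α − |k|}`, which the multinomial theorem applied to
`μ = ∑_{j ≥ 1} p_j ξ_j` turns into a sum over `s` with `|s| = α − |k|` (`coeff_term`). The
substitution `r = k + s` is a bijection onto the pairs `k ≤ r`, `|r| = α`, `k ≤ n`; the Lauricella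
terms with `k ≰ n` vanish because `(−n_j)_{k_j} = 0` for `k_j > n_j`. The summands agree through
`(−N)_α / (−N)_{|k|} = (−1)^{α−|k|} (N−|k|)!/(N−α)!` (`poch_neg_add`) together with an identity in
each coordinate separately (`coord_identity`).
-/

/-- The Pochhammer (rising factorial) symbol `(a)_m = a(a+1)⋯(a+m−1)`, with `(a)_0 = 1`. -/
def poch (a : ℝ) (m : ℕ) : ℝ := ∏ i ∈ Finset.range m, (a + i)

theorem poch_neg (N m : ℕ) : poch (-(N : ℝ)) m = (-1) ^ m * (N.descFactorial m : ℝ) := by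
  induction m with
  | zero => simp [poch]
  | succ m ih =>
    have h : poch (-(N : ℝ)) (m + 1) = poch (-(N : ℝ)) m * (-(N : ℝ) + m) := by
      simp [poch, Finset.prod_range_succ]
    rw [h, ih, Nat.descFactorial_succ]
    rcases le_or_gt m N with hm | hm
    · push_cast [Nat.cast_sub hm]
      ring
    · simp [Nat.descFactorial_of_lt hm]

theorem poch_neg_ne_zero {N m : ℕ} (h : m ≤ N) : poch (-(N : ℝ)) m ≠ 0 := by
  rw [poch_neg]
  have : N.descFactorial m ≠ 0 := by
    rw [Ne, Nat.descFactorial_eq_zero_iff_lt]; omega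
  positivity

theorem poch_neg_add {N a : ℕ} (h : a ≤ N) (b : ℕ) :
    poch (-(N : ℝ)) (a + b)
      = poch (-(N : ℝ)) a * ((-1) ^ b * ((N - a).descFactorial b : ℝ)) := by
  rw [← poch_neg]
  simp only [poch, Finset.prod_range_add]
  push_cast [Nat.cast_sub h]
  congr 1
  refine Finset.prod_congr rfl fun i _ => ?_
  ring

/-- The contribution of a single coordinate to the Lauricella summand with `r = k + s`. -/
theorem coord_identity {p : ℝ} (hp : p ≠ 0) (x : ℝ) (n k s : ℕ) :
    (p * x) ^ (k + s) / ((k + s).factorial : ℝ) * poch (-((k + s : ℕ) : ℝ)) k * poch (-(n : ℝ)) k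
        / (k.factorial : ℝ) * p ^ (-(k : ℤ))
      = (n.choose k : ℝ) * x ^ k * ((p * x) ^ s / (s.factorial : ℝ)) := by
  have h1 : ((k + s).factorial : ℝ) = s.factorial * ((k + s).descFactorial k : ℝ) := by
    have := Nat.factorial_mul_descFactorial (Nat.le_add_right k s)
    rw [Nat.add_sub_cancel_left] at this
    exact_mod_cast this.symm
  have h2 : (n.descFactorial k : ℝ) = k.factorial * (n.choose k : ℝ) := by
    exact_mod_cast Nat.descFactorial_eq_factorial_mul_choose n k
  have h3 : ((k + s).descFactorial k : ℝ) ≠ 0 := by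
    have : (k + s).descFactorial k ≠ 0 := by
      rw [Ne, Nat.descFactorial_eq_zero_iff_lt]; omega
    exact_mod_cast this
  have hk : (k.factorial : ℝ) ≠ 0 := by positivity
  have hs : (s.factorial : ℝ) ≠ 0 := by positivity
  have hsgn : ((-1 : ℝ) ^ k) * (-1) ^ k = 1 := by rw [← mul_pow]; simp
  rw [poch_neg, poch_neg, h1, h2, zpow_neg, zpow_natCast, pow_add, mul_pow p x k]
  field_simp
  linear_combination (p * x) ^ s * (n.choose k : ℝ) * x ^ k * hsgn

open Polynomial in
/-- The coefficient of `v^α` in the term indexed by `k` of the binomial expansion, where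
`a = |k|`, `M = N - |k|`, and `(-μ)^(α - a)` is expanded by the multinomial theorem. -/
theorem coeff_term {δ : ℕ} (y : Fin δ → ℝ) (μ : ℝ) (hμ : μ = ∑ j, y j) (c : ℝ) (a M α : ℕ) :
    (C c * X ^ a * (1 - C μ * X) ^ M : Polynomial ℝ).coeff α
      = if a ≤ α then
          ∑ s ∈ Finset.piAntidiag Finset.univ (α - a),
            c * ((-1) ^ (α - a) * (M.descFactorial (α - a) : ℝ))
              * ∏ j : Fin δ, (y j ^ s j / ((s j).factorial : ℝ))
        else 0 := by
  rw [mul_assoc, coeff_C_mul, coeff_X_pow_mul']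
  split_ifs with h
  · have h1 : (1 - C μ * X : Polynomial ℝ) = (1 + X).comp (C (-μ) * X) := by
      simp [sub_eq_add_neg]
    rw [h1, ← pow_comp, comp_C_mul_X_coeff, coeff_one_add_X_pow, neg_pow, hμ,
      Finset.sum_pow_eq_sum_piAntidiag, Finset.mul_sum, Finset.mul_sum, Finset.mul_sum]
    refine Finset.sum_congr rfl fun s hs => ?_
    rw [Finset.mem_piAntidiag] at hs
    have h2 : ((∏ j, ((s j).factorial : ℝ)) * (Nat.multinomial Finset.univ s : ℝ))
        = ((α - a).factorial : ℝ) := by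
      have := Nat.multinomial_spec Finset.univ s
      rw [hs.1] at this
      exact_mod_cast this
    have h3 : (M.descFactorial (α - a) : ℝ) = (α - a).factorial * (M.choose (α - a) : ℝ) := by
      exact_mod_cast Nat.descFactorial_eq_factorial_mul_choose M (α - a)
    have h4 : (∏ j, ((s j).factorial : ℝ)) ≠ 0 :=
      Finset.prod_ne_zero_iff.2 fun j _ => by positivity
    rw [h3, ← h2, Finset.prod_div_distrib]
    field_simp
  · simp

open Polynomial in
/-- Binomial expansion of the generating function when `ξ 0 = 0`. -/
theorem generating_expansion {δ : ℕ} (ξ : Fin (δ + 1) → ℝ) (hξ0 : ξ 0 = 0) (μ : ℝ)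
    (n : Fin (δ + 1) → ℕ) :
    (∏ j, (1 + C (ξ j - μ) * X) ^ (n j) : Polynomial ℝ)
      = ∑ k ∈ Fintype.piFinset fun j : Fin δ => Finset.range (n j.succ + 1),
          C (∏ j, (((n j.succ).choose (k j) : ℝ) * ξ j.succ ^ k j)) * X ^ (∑ j, k j)
            * (1 - C μ * X) ^ (∑ j, n j - ∑ j, k j) := by
  have h : ∀ j : Fin δ, (1 + C (ξ j.succ - μ) * X : Polynomial ℝ) ^ (n j.succ)
      = ∑ k ∈ Finset.range (n j.succ + 1),
        C (((n j.succ).choose k : ℝ) * ξ j.succ ^ k) * X ^ k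
          * (1 - C μ * X) ^ (n j.succ - k) := by
    intro j
    have e : (1 + C (ξ j.succ - μ) * X : Polynomial ℝ) = C (ξ j.succ) * X + (1 - C μ * X) := by
      rw [C_sub]; ring
    rw [e, add_pow]
    refine Finset.sum_congr rfl fun k _ => ?_
    simp only [C_mul, C_pow, mul_pow, map_natCast]
    ring
  rw [Fin.prod_univ_succ, Finset.prod_congr rfl fun j _ => h j, Finset.prod_univ_sum,
    Finset.mul_sum]
  refine Finset.sum_congr rfl fun k hk => ?_
  have hk' : ∀ j, k j ≤ n j.succ := fun j => by
    have := Fintype.mem_piFinset.1 hk j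
    rw [Finset.mem_range] at this
    omega
  have hN : ∑ j, n j - ∑ j, k j = n 0 + ∑ j : Fin δ, (n j.succ - k j) := by
    have e : ∑ j : Fin δ, n j.succ = ∑ j : Fin δ, (n j.succ - k j) + ∑ j, k j := by
      rw [← Finset.sum_add_distrib]
      exact Finset.sum_congr rfl fun j _ => by have := hk' j; omega
    rw [Fin.sum_univ_succ, e]
    omega
  have h0 : (1 + C (ξ 0 - μ) * X : Polynomial ℝ) = 1 - C μ * X := by
    rw [hξ0, C_sub, C_0]; ring
  rw [Finset.prod_mul_distrib, Finset.prod_mul_distrib, Finset.prod_pow_eq_pow_sum,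
    Finset.prod_pow_eq_pow_sum, hN, h0, pow_add, map_prod]
  ring

open Polynomial in
/-- Lauricella hypergeometric representation of the multivariate Krawtchouk polynomials:
with `d = δ+1`, `ξ_0 = 0` and `p_j > 0` for `1 ≤ j ≤ δ`, for `N = |n|` and `0 ≤ α ≤ N`,
`K_α(n) = (−N)_α ∑_{|r| = α} [∏_{j=1}^{δ} (p_j ξ_j)^{r_j} / r_j!] F_B(r, n)`, where
`F_B(r, n) = ∑_{k ≤ r} (−r)_k (−n)_k / ((−N)_{|k|} k!) ∏_{j=1}^{δ} p_j^{−k_j}`.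
Here `K_α(n)` is defined by `∏_j (1 + v(ξ_j − μ))^{n_j} = ∑_α v^α K_α(n)`. -/
theorem multivariate_krawtchouk_lauricella
    (δ : ℕ) (ξ p : Fin (δ + 1) → ℝ)
    (hp : ∀ j, 0 ≤ p j) (hsum : ∑ j, p j = 1)
    (hξ0 : ξ 0 = 0) (hppos : ∀ j : Fin (δ + 1), j ≠ 0 → 0 < p j)
    (μ : ℝ) (hμ : μ = ∑ j, p j * ξ j)
    (K : ℕ → (Fin (δ + 1) → ℕ) → ℝ)
    (hK : ∀ (α : ℕ) (n : Fin (δ + 1) → ℕ),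
      K α n = (∏ j, (1 + C (ξ j - μ) * X) ^ (n j) : Polynomial ℝ).coeff α)
    (n : Fin (δ + 1) → ℕ) (N : ℕ) (hN : N = ∑ j, n j) (α : ℕ) (hα : α ≤ N) :
    K α n
      = poch (-(N : ℝ)) α *
          ∑ r ∈ Finset.Nat.antidiagonalTuple δ α,
            (∏ j : Fin δ, (p j.succ * ξ j.succ) ^ (r j) / ((r j).factorial : ℝ)) *
              ∑ k ∈ Finset.Iic r,
                (∏ j : Fin δ, poch (-(r j : ℝ)) (k j)) *
                    (∏ j : Fin δ, poch (-((n j.succ : ℕ) : ℝ)) (k j)) /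
                    (poch (-(N : ℝ)) (∑ j, k j) * ∏ j : Fin δ, ((k j).factorial : ℝ)) *
                  ∏ j : Fin δ, (p j.succ) ^ (-(k j : ℤ)) := by
  classical
  have hμ' : μ = ∑ j : Fin δ, p j.succ * ξ j.succ := by
    rw [hμ, Fin.sum_univ_succ, hξ0, mul_zero, zero_add]
  rw [hK, generating_expansion ξ hξ0 μ n, Polynomial.finsetSum_coeff, ← hN]
  simp only [coeff_term (fun j : Fin δ => p j.succ * ξ j.succ) μ hμ']
  rw [← Finset.sum_filter]
  -- Terms with `k ≰ n` vanish, so the inner sum may be restricted.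
  have hres : ∀ r : Fin δ → ℕ,
      ∑ k ∈ Finset.Iic r,
        (∏ j : Fin δ, poch (-(r j : ℝ)) (k j)) *
            (∏ j : Fin δ, poch (-((n j.succ : ℕ) : ℝ)) (k j)) /
            (poch (-(N : ℝ)) (∑ j, k j) * ∏ j : Fin δ, ((k j).factorial : ℝ)) *
          ∏ j : Fin δ, (p j.succ) ^ (-(k j : ℤ))
      = ∑ k ∈ (Finset.Iic r).filter (fun k => ∀ j, k j ≤ n j.succ),
        (∏ j : Fin δ, poch (-(r j : ℝ)) (k j)) *
            (∏ j : Fin δ, poch (-((n j.succ : ℕ) : ℝ)) (k j)) /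
            (poch (-(N : ℝ)) (∑ j, k j) * ∏ j : Fin δ, ((k j).factorial : ℝ)) *
          ∏ j : Fin δ, (p j.succ) ^ (-(k j : ℤ)) := by
    intro r
    refine (Finset.sum_filter_of_ne fun k _ hne j => ?_).symm
    by_contra! hlt
    refine hne ?_
    have hz : ∏ j : Fin δ, poch (-((n j.succ : ℕ) : ℝ)) (k j) = 0 :=
      Finset.prod_eq_zero (Finset.mem_univ j) (by
        rw [poch_neg, Nat.descFactorial_of_lt hlt]; simp)
    simp [hz]
  simp only [hres, Finset.mul_sum]
  rw [Finset.sum_sigma', Finset.sum_sigma']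
  -- Reindex by `(k, s) ↦ (k + s, k)`, with inverse `(r, k) ↦ (k, r - k)`.
  refine Finset.sum_bij' (fun x _ => ⟨x.1 + x.2, x.1⟩) (fun y _ => ⟨y.2, y.1 - y.2⟩)
    ?_ ?_ ?_ ?_ ?_
  · rintro ⟨k, s⟩ h
    simp only [Finset.mem_sigma, Finset.mem_filter, Fintype.mem_piFinset, Finset.mem_range,
      Finset.mem_piAntidiag, Finset.Nat.mem_antidiagonalTuple, Finset.mem_Iic, Pi.add_apply,
      Finset.sum_add_distrib] at h ⊢
    have hs : ∑ j, s j = α - ∑ j, k j := h.2.1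
    refine ⟨by omega, fun j => by simp, fun j => ?_⟩
    have := h.1.1 j
    omega
  · rintro ⟨r, k⟩ h
    simp only [Finset.mem_sigma, Finset.mem_filter, Fintype.mem_piFinset, Finset.mem_range,
      Finset.mem_piAntidiag, Finset.Nat.mem_antidiagonalTuple, Finset.mem_Iic, Pi.sub_apply]
      at h ⊢
    obtain ⟨hr, hkr, hkn⟩ := h
    have e : ∑ j, r j = ∑ j, (r j - k j) + ∑ j, k j := by
      rw [← Finset.sum_add_distrib]
      exact Finset.sum_congr rfl fun j _ => (Nat.sub_add_cancel (hkr j)).symm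
    refine ⟨⟨fun j => ?_, by omega⟩, by omega, by simp⟩
    have := hkn j
    omega
  · rintro ⟨k, s⟩ _
    simp
  · rintro ⟨r, k⟩ h
    simp only [Finset.mem_sigma, Finset.mem_filter, Finset.mem_Iic] at h
    simp [add_tsub_cancel_of_le h.2.1]
  · rintro ⟨k, s⟩ h
    simp only [Finset.mem_sigma, Finset.mem_filter, Fintype.mem_piFinset, Finset.mem_range,
      Finset.mem_piAntidiag] at h
    obtain ⟨⟨-, hkα⟩, hs, -⟩ := h
    have hα' : α = ∑ j, k j + (α - ∑ j, k j) := by omega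
    have hkN : ∑ j, k j ≤ N := hkα.trans hα
    have hne := poch_neg_ne_zero hkN
    have hprod := Finset.prod_congr (rfl : (Finset.univ : Finset (Fin δ)) = _) fun j _ =>
      coord_identity (hppos j.succ (Fin.succ_ne_zero j)).ne' (ξ j.succ) (n j.succ) (k j) (s j)
    simp only [Finset.prod_mul_distrib, Finset.prod_div_distrib] at hprod
    have hpoch := poch_neg_add hkN (α - ∑ j, k j)
    rw [← hα'] at hpoch
    simp only [Finset.prod_mul_distrib, Finset.prod_div_distrib, Pi.add_apply, hpoch]
    have hk0 : (∏ j, ((k j).factorial : ℝ)) ≠ 0 :=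
      Finset.prod_ne_zero_iff.2 fun j _ => by positivity
    generalize ((-1 : ℝ) ^ (α - ∑ j, k j) * ((N - ∑ j, k j).descFactorial (α - ∑ j, k j) : ℝ)) = D
    rw [mul_right_comm, ← hprod]
    field_simp
end
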